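/- Let A ∈ ℝ^{n×n}, B ∈ ℝ^{n×m} with (A,B) stabilizable and all eigenvalues of A in the closed unit disc, and let κ̄ ∈ ℕ satisfy κ̄·ω_max < π/2. Let ρ > 0 satisfy ρ·cos(κ̄·ω_max) > 1/2. Then there exists ε* > 0 such that for all ε ∈ (0, ε*] and for every integer delay κ ∈ {0, …, κ̄}, the delayed closed-loop system x(k+1) = A x(k) − ρ B K_ε x(k − κ) is asymptotically stable, i.e., every solution x : {−κ̄, −κ̄+1, …} → ℝ^n of the recursion (with arbitrary initial data on {−κ̄,…,0}) satisfies x(k) → 0 as k → ∞. Here P_ε is the unique positive definite solution of the discrete algebraic Riccati equation AᵀP A − P − AᵀP B (I + BᵀP B)^{−1} BᵀP A + εI = 0 and K_ε := (I + BᵀP_ε B)^{−1} BᵀP_ε A. -/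

import Mathlib

open Matrix Filter Topology Kronecker
open scoped Classical

noncomputable section

/-- A complex square matrix is Schur stable if all its eigenvalues lie in the open unit disc. -/
def SchurStableC {ι : Type*} [Fintype ι] [DecidableEq ι] (M : Matrix ι ι ℂ) : Prop :=
  ∀ μ ∈ spectrum ℂ M, ‖μ‖ < 1

/-- A real square matrix is Schur stable if all its (complex) eigenvalues lie in the open
unit disc. -/
def SchurStable {ι : Type*} [Fintype ι] [DecidableEq ι] (M : Matrix ι ι ℝ) : Prop :=
  SchurStableC (M.map Complex.ofReal)

/-- All eigenvalues of a real square matrix lie in the closed unit disc. -/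
def EigInClosedUnitDisc {ι : Type*} [Fintype ι] [DecidableEq ι] (M : Matrix ι ι ℝ) : Prop :=
  ∀ μ ∈ spectrum ℂ (M.map Complex.ofReal), ‖μ‖ ≤ 1

/-- The pair (A,B) is stabilizable. -/
def Stabilizable {n m : ℕ} (A : Matrix (Fin n) (Fin n) ℝ) (B : Matrix (Fin n) (Fin m) ℝ) : Prop :=
  ∃ K : Matrix (Fin m) (Fin n) ℝ, SchurStable (A - B * K)

/-- The pair (C,A) is detectable. -/
def Detectable {n q : ℕ} (C : Matrix (Fin q) (Fin n) ℝ) (A : Matrix (Fin n) (Fin n) ℝ) : Prop :=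
  ∃ F : Matrix (Fin n) (Fin q) ℝ, SchurStable (A - F * C)

/-- `P` is a positive definite solution of the discrete algebraic Riccati equation
`AᵀPA − P − AᵀPB(I + BᵀPB)⁻¹BᵀPA + εI = 0`. -/
def IsDARESol {n m : ℕ} (A : Matrix (Fin n) (Fin n) ℝ) (B : Matrix (Fin n) (Fin m) ℝ)
    (ε : ℝ) (P : Matrix (Fin n) (Fin n) ℝ) : Prop :=
  P.PosDef ∧
    Aᵀ * P * A - P - Aᵀ * P * B * (1 + Bᵀ * P * B)⁻¹ * (Bᵀ * P * A)
      + ε • (1 : Matrix (Fin n) (Fin n) ℝ) = 0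

/-- The low-gain feedback `K = (I + BᵀPB)⁻¹BᵀPA`. -/
def gainK {n m : ℕ} (A : Matrix (Fin n) (Fin n) ℝ) (B : Matrix (Fin n) (Fin m) ℝ)
    (P : Matrix (Fin n) (Fin n) ℝ) : Matrix (Fin m) (Fin n) ℝ :=
  (1 + Bᵀ * P * B)⁻¹ * (Bᵀ * P * A)

/-- `ω_max`: zero if `A` is Schur stable, otherwise the largest `ω ∈ [0,π]` with
`det(e^{iω}I − A) = 0`. -/
def omegaMax {n : ℕ} (A : Matrix (Fin n) (Fin n) ℝ) : ℝ :=
  if SchurStable A then 0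
  else sSup {ω : ℝ | ω ∈ Set.Icc 0 Real.pi ∧
    (Complex.exp (ω * Complex.I) • (1 : Matrix (Fin n) (Fin n) ℂ)
      - A.map Complex.ofReal).det = 0}

/-- In-degree `d_in(i) = Σ_j a_{ij}`. -/
def dIn {N : ℕ} (a : Fin N → Fin N → ℝ) (i : Fin N) : ℝ := ∑ j, a i j

/-- The Laplacian matrix of the weights `a`. -/
def lapL {N : ℕ} (a : Fin N → Fin N → ℝ) : Matrix (Fin N) (Fin N) ℝ :=
  Matrix.of fun i j => if i = j then dIn a i else -a i j

/-- The expanded Laplacian `L̄ = L + diag(ι)`. -/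
def lapLbar {N : ℕ} (a : Fin N → Fin N → ℝ) (ι : Fin N → ℝ) : Matrix (Fin N) (Fin N) ℝ :=
  lapL a + Matrix.diagonal ι

/-- `D̄ = I − (2I + D_in)⁻¹ L̄`. -/
def DbarM {N : ℕ} (a : Fin N → Fin N → ℝ) (ι : Fin N → ℝ) : Matrix (Fin N) (Fin N) ℝ :=
  1 - ((2 : ℝ) • (1 : Matrix (Fin N) (Fin N) ℝ) + Matrix.diagonal (dIn a))⁻¹ * lapLbar a ι

/-!
A characteristic root `z` of the delayed loop with `1 ≤ ‖z‖` and eigenvector `v` makes `z` an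
eigenvalue of the undelayed loop `A - c B K_ε` whose gain is scaled by `c = ρ z⁻ᵏ`, `k` the delay.
Since `(A, B)` is stabilizable and the spectrum of `A` lies in the closed unit disc, the Riccati
solutions stay bounded and `P = 0`, `K = 0` is the only solution at `ε = 0`, so `P_ε` and `K_ε` tend
to zero as `ε → 0`. Hence `z` is close to an eigenvalue of `A` on the unit circle, where the
condition on `ρ` and the maximal delay says `re c > 1/2`. Completing squares in the Riccati equation
turns `re c > 1/2` into a strict decrease of the energy `v* P_ε v` along the loop, which contradicts
`1 ≤ ‖z‖`.
-/

section LinearRecursion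

theorem tendsto_pow_zero_of_spectralRadius_lt_one {𝔸 : Type*} [NormedRing 𝔸] [NormedAlgebra ℂ 𝔸]
    [CompleteSpace 𝔸] {a : 𝔸} (ha : spectralRadius ℂ a < 1) :
    Tendsto (fun k : ℕ => a ^ k) atTop (𝓝 0) := by
  obtain ⟨r, har, hr⟩ := ENNReal.lt_iff_exists_nnreal_btwn.1 ha
  have hgelfand := (spectrum.pow_nnnorm_pow_one_div_tendsto_nhds_spectralRadius a).eventually
    (gt_mem_nhds har)
  refine squeeze_zero_norm' ?_
    (tendsto_pow_atTop_nhds_zero_of_lt_one r.2 (ENNReal.coe_lt_one_iff.1 hr))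
  filter_upwards [hgelfand, eventually_gt_atTop 0] with k hk hkpos
  have hroot := ENNReal.rpow_le_rpow hk.le k.cast_nonneg
  rw [← ENNReal.rpow_mul, one_div_mul_cancel (by positivity), ENNReal.rpow_one,
    ENNReal.rpow_natCast] at hroot
  exact_mod_cast hroot

theorem tendsto_pow_zero_of_forall_mem_spectrum {𝔸 : Type*} [NormedRing 𝔸] [NormedAlgebra ℂ 𝔸]
    [CompleteSpace 𝔸] {a : 𝔸} (ha : ∀ μ ∈ spectrum ℂ a, ‖μ‖ < 1) :
    Tendsto (fun k : ℕ => a ^ k) atTop (𝓝 0) := by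
  refine tendsto_pow_zero_of_spectralRadius_lt_one ?_
  rcases (spectrum ℂ a).eq_empty_or_nonempty with hempty | hne
  · simp [spectralRadius, hempty]
  · exact_mod_cast spectrum.spectralRadius_lt_of_forall_lt_of_nonempty (r := 1) hne
      fun μ hμ => by exact_mod_cast ha μ hμ

variable {E : Type*} [NormedAddCommGroup E] [NormedSpace ℂ E] [FiniteDimensional ℂ E]

theorem tendsto_end_pow_apply_zero (T : Module.End ℂ E)
    (hT : ∀ (μ : ℂ) (v : E), v ≠ 0 → T v = μ • v → ‖μ‖ < 1) (v : E) :
    Tendsto (fun k : ℕ => (T ^ k) v) atTop (𝓝 0) := by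
  have : CompleteSpace E := FiniteDimensional.complete ℂ E
  have hspec : ∀ μ ∈ spectrum ℂ (Module.End.toContinuousLinearMap E T), ‖μ‖ < 1 := by
    intro μ hμ
    rw [AlgEquiv.spectrum_eq, ← Module.End.hasEigenvalue_iff_mem_spectrum] at hμ
    obtain ⟨w, hw⟩ := hμ.exists_hasEigenvector
    exact hT μ w hw.2 hw.apply_eq_smul
  have hpow := tendsto_pow_zero_of_forall_mem_spectrum hspec
  have happly := ((ContinuousLinearMap.apply ℂ E v).continuous.tendsto 0).comp hpow
  rw [map_zero] at happly
  refine happly.congr fun k => ?_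
  rw [Function.comp_apply, ← map_pow, ContinuousLinearMap.apply_apply]
  rfl

variable {F : Type*} [AddCommGroup F] [Module ℂ F]

/-- All characteristic roots of the delay recursion `y(k+1) = A y(k) − D y(k−κ)`, that is, all
solutions `z` of `det(z^{κ+1} I − z^κ A + D) = 0`, lie in the open unit disc. The determinantal
equation is expressed through the vectors it annihilates. -/
def DelaySchurStable (κ : ℕ) (A D : Module.End ℂ F) : Prop :=
  ∀ (z : ℂ) (v : F), v ≠ 0 → z ^ (κ + 1) • v = z ^ κ • A v - D v → ‖z‖ < 1

/-- The companion operator of the delay recursion `y(k+1) = A y(k) − D y(k−κ)`: it advances the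
window `(y(k−κ), …, y(k))` by one step. -/
def delayCompanion (κ : ℕ) (A D : Module.End ℂ F) : Module.End ℂ (Fin (κ + 1) → F) :=
  LinearMap.pi (Fin.lastCases
    (A ∘ₗ LinearMap.proj (Fin.last κ) - D ∘ₗ LinearMap.proj 0)
    fun i => LinearMap.proj i.succ)

@[simp]
theorem delayCompanion_apply_castSucc {κ : ℕ} (A D : Module.End ℂ F) (X : Fin (κ + 1) → F)
    (i : Fin κ) : delayCompanion κ A D X i.castSucc = X i.succ := by
  simp [delayCompanion]

@[simp]
theorem delayCompanion_apply_last {κ : ℕ} (A D : Module.End ℂ F) (X : Fin (κ + 1) → F) :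
    delayCompanion κ A D X (Fin.last κ) = A (X (Fin.last κ)) - D (X 0) := by
  simp [delayCompanion]

theorem DelaySchurStable.norm_lt_one_of_delayCompanion_eq_smul {κ : ℕ} {A D : Module.End ℂ F}
    (h : DelaySchurStable κ A D) {z : ℂ} {X : Fin (κ + 1) → F} (hX : X ≠ 0)
    (heig : delayCompanion κ A D X = z • X) : ‖z‖ < 1 := by
  have hsucc (i : Fin κ) : X i.succ = z • X i.castSucc := by
    simpa only [delayCompanion_apply_castSucc, Pi.smul_apply] using congrFun heig i.castSucc
  have hlast : A (X (Fin.last κ)) - D (X 0) = z • X (Fin.last κ) := by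
    simpa only [delayCompanion_apply_last, Pi.smul_apply] using congrFun heig (Fin.last κ)
  have hgeom (i : Fin (κ + 1)) : X i = z ^ (i : ℕ) • X 0 := by
    induction i using Fin.induction with
    | zero => simp
    | succ i ih => rw [hsucc, ih, smul_smul, Fin.val_succ, Fin.val_castSucc, pow_succ']
  refine h z (X 0) (fun h0 => hX (funext fun i => by simp [hgeom i, h0])) ?_
  rw [hgeom (Fin.last κ), map_smul, smul_smul, ← pow_succ'] at hlast
  exact hlast.symm

theorem delayCompanion_pow_apply_window {κ : ℕ} {A D : Module.End ℂ F} {y : ℕ → F}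
    (hy : ∀ k, y (k + κ + 1) = A (y (k + κ)) - D (y k)) (k : ℕ) :
    (delayCompanion κ A D ^ k) (fun i => y i) = fun i : Fin (κ + 1) => y (k + i) := by
  induction k with
  | zero => simp
  | succ k ih =>
    rw [pow_succ', Module.End.mul_apply, ih]
    funext i
    refine Fin.lastCases ?_ (fun i => ?_) i
    · rw [delayCompanion_apply_last, Fin.val_last, Fin.val_zero, add_zero, ← hy k]
      congr 1
      omega
    · rw [delayCompanion_apply_castSucc, Fin.val_succ, Fin.val_castSucc]
      congr 1
      omega

theorem DelaySchurStable.tendsto_zero {κ : ℕ} {A D : Module.End ℂ E} (h : DelaySchurStable κ A D)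
    {y : ℕ → E} (hy : ∀ k, y (k + κ + 1) = A (y (k + κ)) - D (y k)) :
    Tendsto y atTop (𝓝 0) := by
  have hwindow := tendsto_end_pow_apply_zero (delayCompanion κ A D)
    (fun _ _ => h.norm_lt_one_of_delayCompanion_eq_smul) (fun i => y i)
  simp_rw [delayCompanion_pow_apply_window hy] at hwindow
  simpa using tendsto_pi_nhds.1 hwindow 0

end LinearRecursion

section Eigenvectors

variable {n : Type*} [Fintype n]

theorem mem_spectrum_of_mulVec_eq_smul {K : Type*} [Field K] [DecidableEq n]
    {M : Matrix n n K} {μ : K} {v : n → K} (hv : v ≠ 0) (h : M *ᵥ v = μ • v) :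
    μ ∈ spectrum K M := by
  rw [← Matrix.spectrum_toLin', ← Module.End.hasEigenvalue_iff_mem_spectrum]
  exact Module.End.hasEigenvalue_of_hasEigenvector
    ⟨Module.End.mem_eigenspace_iff.2 (by rwa [Matrix.toLin'_apply]), hv⟩

theorem star_mem_spectrum_of_conjTranspose_mulVec_eq_smul {K : Type*} [Field K] [StarRing K]
    [DecidableEq n] {M : Matrix n n K} {μ : K} {v : n → K} (hv : v ≠ 0) (h : Mᴴ *ᵥ v = μ • v) :
    star μ ∈ spectrum K M := by
  have hmem := mem_spectrum_of_mulVec_eq_smul hv h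
  rwa [← Matrix.star_eq_conjTranspose, spectrum.map_star, Set.mem_star] at hmem

/-- `M` maps the range of `P` onto itself, so its restriction to that range is invertible; `v` is
chosen with `P v` an eigenvector of this restriction. -/
theorem exists_eigenvector_of_mul_mul_eq_self {K : Type*} [Field K] [IsAlgClosed K]
    {M P N : Matrix n n K} (h : M * P * N = P) (hP : P ≠ 0) :
    ∃ (μ : K) (v : n → K), P *ᵥ v ≠ 0 ∧ M *ᵥ (P *ᵥ v) = μ • P *ᵥ v ∧
      P *ᵥ v = μ • P *ᵥ (N *ᵥ v) := by
  have hMPN (x : n → K) : M *ᵥ (P *ᵥ (N *ᵥ x)) = P *ᵥ x := by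
    rw [Matrix.mulVec_mulVec, Matrix.mulVec_mulVec, h]
  set V := LinearMap.range P.mulVecLin
  have hle : V ≤ V.map M.mulVecLin := by
    rintro _ ⟨x, rfl⟩
    exact ⟨P *ᵥ (N *ᵥ x), ⟨N *ᵥ x, rfl⟩, hMPN x⟩
  have hmap : V = V.map M.mulVecLin :=
    Submodule.eq_of_le_of_finrank_le hle (Submodule.finrank_map_le _ _)
  let T : Module.End K V :=
    M.mulVecLin.restrict fun x hx => hmap ▸ Submodule.mem_map_of_mem hx
  have hinj : Function.Injective T := by
    refine LinearMap.injective_iff_surjective.2 fun ⟨y, x, hx⟩ => ?_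
    exact ⟨⟨P *ᵥ (N *ᵥ x), N *ᵥ x, rfl⟩, Subtype.ext ((hMPN x).trans hx)⟩
  have : Nontrivial V := by
    rw [Submodule.nontrivial_iff_ne_bot, Ne, LinearMap.range_eq_bot]
    exact fun h0 => hP (Matrix.ext_of_mulVec_single fun i =>
      (LinearMap.congr_fun h0 (Pi.single i 1)).trans (Matrix.zero_mulVec _).symm)
  obtain ⟨μ, hμ⟩ := Module.End.exists_eigenvalue T
  obtain ⟨⟨_, v, rfl⟩, hw⟩ := hμ.exists_hasEigenvector
  have hMw : M *ᵥ (P *ᵥ v) = μ • P *ᵥ v := congrArg Subtype.val hw.apply_eq_smul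
  refine ⟨μ, v, fun h0 => hw.2 (Subtype.ext h0), hMw, ?_⟩
  have hT : T ⟨P *ᵥ v, v, rfl⟩ = T (μ • ⟨P *ᵥ (N *ᵥ v), N *ᵥ v, rfl⟩) := by
    rw [map_smul]
    exact Subtype.ext (hMw.trans (congrArg (μ • ·) (hMPN v).symm))
  exact congrArg Subtype.val (hinj hT)

end Eigenvectors

open scoped ComplexOrder MatrixOrder

section Energy

variable {𝕜 : Type*} [RCLike 𝕜] {m n : Type*} [Fintype m] [Fintype n]

/-- The real quadratic form `Re (v* S v)` of a matrix `S` at `v`, linear in `S`. -/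
def energy (v : n → 𝕜) : Matrix n n 𝕜 →ₗ[ℝ] ℝ where
  toFun S := RCLike.re (star v ⬝ᵥ S *ᵥ v)
  map_add' S T := by rw [Matrix.add_mulVec, dotProduct_add, map_add]
  map_smul' r S := by
    rw [Matrix.smul_mulVec, dotProduct_smul, RCLike.smul_re, RingHom.id_apply, smul_eq_mul]

theorem energy_apply (v : n → 𝕜) (S : Matrix n n 𝕜) :
    energy v S = RCLike.re (star v ⬝ᵥ S *ᵥ v) := rfl

@[simp]
theorem energy_zero (S : Matrix n n 𝕜) : energy 0 S = 0 := by
  simp [energy_apply]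

theorem energy_conjTranspose_mul_mul (v : n → 𝕜) (S : Matrix m m 𝕜) (X : Matrix m n 𝕜) :
    energy v (Xᴴ * S * X) = energy (X *ᵥ v) S := by
  rw [energy_apply, energy_apply, Matrix.star_mulVec, ← Matrix.dotProduct_mulVec,
    Matrix.mulVec_mulVec, Matrix.mulVec_mulVec, Matrix.mul_assoc]

theorem energy_conjTranspose_mul_self [DecidableEq m] (v : n → 𝕜) (X : Matrix m n 𝕜) :
    energy v (Xᴴ * X) = energy (X *ᵥ v) 1 := by
  rw [← energy_conjTranspose_mul_mul, Matrix.mul_one]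

theorem energy_smul (z : 𝕜) (v : n → 𝕜) (S : Matrix n n 𝕜) :
    energy (z • v) S = ‖z‖ ^ 2 * energy v S := by
  rw [energy_apply, energy_apply, Matrix.mulVec_smul, star_smul, smul_dotProduct, dotProduct_smul,
    smul_smul, RCLike.star_def, RCLike.conj_mul, smul_eq_mul, ← RCLike.ofReal_pow,
    RCLike.re_ofReal_mul]

theorem energy_nonneg {S : Matrix n n 𝕜} (hS : S.PosSemidef) (v : n → 𝕜) : 0 ≤ energy v S :=
  (RCLike.nonneg_iff.1 (hS.dotProduct_mulVec_nonneg v)).1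

theorem energy_pos {S : Matrix n n 𝕜} (hS : S.PosSemidef) {v : n → 𝕜} (hv : S *ᵥ v ≠ 0) :
    0 < energy v S := by
  have hne : star v ⬝ᵥ S *ᵥ v ≠ 0 := fun h0 => hv ((hS.dotProduct_mulVec_zero_iff v).1 h0)
  exact (RCLike.pos_iff.1 ((hS.dotProduct_mulVec_nonneg v).lt_of_ne' hne)).1

theorem energy_one_pos [DecidableEq n] {v : n → 𝕜} (hv : v ≠ 0) :
    0 < energy v (1 : Matrix n n 𝕜) :=
  energy_pos Matrix.PosSemidef.one (by rwa [Matrix.one_mulVec])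

theorem energy_congr {S : Matrix n n 𝕜} (hS : S.IsHermitian) {v w : n → 𝕜}
    (h : S *ᵥ v = S *ᵥ w) : energy v S = energy w S := by
  have hswap (x y : n → 𝕜) : star x ⬝ᵥ S *ᵥ y = star (S *ᵥ x) ⬝ᵥ y := by
    rw [Matrix.star_mulVec, hS.eq, Matrix.dotProduct_mulVec]
  rw [energy_apply, energy_apply, h, hswap v w, h, hswap w w]

end Energy

section EnergyBound

open scoped Matrix.Norms.L2Operator

theorem energy_le_norm_mul {n : Type*} [Fintype n] [DecidableEq n] {S : Matrix n n ℂ}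
    (hS : S.IsHermitian) (v : n → ℂ) : energy v S ≤ ‖S‖ * energy v 1 := by
  have hle : S ≤ algebraMap ℝ _ ‖S‖ := IsSelfAdjoint.le_algebraMap_norm_self hS
  have hdiff := energy_nonneg (Matrix.le_iff.1 hle) v
  rwa [map_sub, Algebra.algebraMap_eq_smul_one, map_smul, smul_eq_mul, sub_nonneg] at hdiff

end EnergyBound

section Riccati

variable {𝕜 : Type*} [RCLike 𝕜] {m n : Type*} [Fintype m] [Fintype n] [DecidableEq n]
  {A : Matrix n n 𝕜} {B : Matrix n m 𝕜} {ε : ℝ} {P : Matrix n n 𝕜}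
  {K : Matrix m n 𝕜}

/-- `P` solves the discrete algebraic Riccati equation with constant term `ε I`, and `K` is the
associated gain. Both equations are written through the closed-loop matrix `A - BK` rather than
through `(I + B*PB)⁻¹`, so that they are polynomial in `(ε, P, K)`. -/
structure IsRiccatiPair (A : Matrix n n 𝕜) (B : Matrix n m 𝕜) (ε : ℝ) (P : Matrix n n 𝕜)
    (K : Matrix m n 𝕜) : Prop where
  posSemidef : P.PosSemidef
  costate : Aᴴ * P * (A - B * K) = P - ε • 1
  gain : Bᴴ * P * (A - B * K) = K

theorem isClosed_setOf_isRiccatiPair (A : Matrix n n 𝕜) (B : Matrix n m 𝕜) :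
    IsClosed {p : ℝ × Matrix n n 𝕜 × Matrix m n 𝕜 | IsRiccatiPair A B p.1 p.2.1 p.2.2} := by
  have hset : {p : ℝ × Matrix n n 𝕜 × Matrix m n 𝕜 | IsRiccatiPair A B p.1 p.2.1 p.2.2} =
      {p | p.2.1.PosSemidef} ∩ ({p | Aᴴ * p.2.1 * (A - B * p.2.2) = p.2.1 - p.1 • 1} ∩
        {p | Bᴴ * p.2.1 * (A - B * p.2.2) = p.2.2}) :=
    Set.ext fun p => ⟨fun h => ⟨h.posSemidef, h.costate, h.gain⟩, fun h => ⟨h.1, h.2.1, h.2.2⟩⟩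
  have hpos : IsClosed {M : Matrix n n 𝕜 | M.PosSemidef} := by
    simp only [Matrix.posSemidef_iff_dotProduct_mulVec, Matrix.IsHermitian, Set.ofPred_and,
      Set.ofPred_forall]
    exact (isClosed_eq (by fun_prop) continuous_id).inter
      (isClosed_iInter fun x => isClosed_le continuous_const (by fun_prop))
  rw [hset]
  exact (hpos.preimage (by fun_prop)).inter ((isClosed_eq (by fun_prop) (by fun_prop)).inter
    (isClosed_eq (by fun_prop) (by fun_prop)))

namespace IsRiccatiPair

theorem completion_of_squares [DecidableEq m] (h : IsRiccatiPair A B ε P K) (L : Matrix m n 𝕜) :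
    (A - B * L)ᴴ * P * (A - B * L) =
      P - ε • 1 - Lᴴ * L + (L - K)ᴴ * (1 + Bᴴ * P * B) * (L - K) := by
  have hadj : (A - B * K)ᴴ * P * B = Kᴴ := by
    simpa [Matrix.mul_assoc, h.posSemidef.isHermitian.eq] using congrArg conjTranspose h.gain
  have hsplit : A - B * L = A - B * K - B * (L - K) := by
    rw [Matrix.mul_sub]
    abel
  have hleft : (A - B * L)ᴴ * P * (A - B * K) = P - ε • 1 - Lᴴ * K := by
    rw [conjTranspose_sub, conjTranspose_mul, Matrix.sub_mul, Matrix.sub_mul, h.costate,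
      Matrix.mul_assoc Lᴴ, Matrix.mul_assoc Lᴴ, h.gain]
  have hright : (A - B * L)ᴴ * P * B = Kᴴ - (L - K)ᴴ * (Bᴴ * P * B) := by
    rw [hsplit, conjTranspose_sub, conjTranspose_mul, Matrix.sub_mul, Matrix.sub_mul, hadj]
    simp only [Matrix.mul_assoc]
  calc (A - B * L)ᴴ * P * (A - B * L)
      = (A - B * L)ᴴ * P * (A - B * K) - (A - B * L)ᴴ * P * B * (L - K) := by
        conv_lhs => enter [2]; rw [hsplit]
        rw [Matrix.mul_sub, Matrix.mul_assoc _ B]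
    _ = P - ε • 1 - Lᴴ * K - (Kᴴ - (L - K)ᴴ * (Bᴴ * P * B)) * (L - K) := by
        rw [hleft, hright]
    _ = P - ε • 1 - Lᴴ * L + (L - K)ᴴ * (1 + Bᴴ * P * B) * (L - K) := by
        simp only [conjTranspose_sub, Matrix.mul_sub, Matrix.sub_mul, Matrix.mul_add,
          Matrix.add_mul, Matrix.mul_one]
        abel

theorem conjTranspose_mul_mul_closedLoop (h : IsRiccatiPair A B ε P K) :
    (A - B * K)ᴴ * P * (A - B * K) = P - ε • 1 - Kᴴ * K := by
  rw [h.completion_of_squares K, sub_self, Matrix.mul_zero, add_zero]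

theorem conjTranspose_mul_gain_le (h : IsRiccatiPair A B ε P K) (hε : 0 ≤ ε) : Kᴴ * K ≤ P := by
  have hsum : P - Kᴴ * K = (A - B * K)ᴴ * P * (A - B * K) + ε • 1 := by
    rw [h.conjTranspose_mul_mul_closedLoop]
    abel
  rw [Matrix.le_iff, hsum]
  exact (h.posSemidef.conjTranspose_mul_mul_same _).add (Matrix.PosSemidef.one.smul hε)

theorem le_conjTranspose_mul_mul_add (h : IsRiccatiPair A B ε P K) (hε : ε ≤ 1)
    (L : Matrix m n 𝕜) : P ≤ (A - B * L)ᴴ * P * (A - B * L) + (Lᴴ * L + 1) := by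
  have hsum : (A - B * L)ᴴ * P * (A - B * L) + (Lᴴ * L + 1) - P =
      (L - K)ᴴ * (1 + Bᴴ * P * B) * (L - K) + (1 - ε) • (1 : Matrix n n 𝕜) := by
    rw [h.completion_of_squares L, sub_smul, one_smul]
    abel
  rw [Matrix.le_iff, hsum]
  exact ((Matrix.PosSemidef.one.add
    (h.posSemidef.conjTranspose_mul_mul_same B)).conjTranspose_mul_mul_same _).add
      (Matrix.PosSemidef.one.smul (sub_nonneg.2 hε))

end IsRiccatiPair

end Riccati

section SteinInequality

variable {𝔸 : Type*} [CStarAlgebra 𝔸] [PartialOrder 𝔸] [StarOrderedRing 𝔸] {a p q : 𝔸}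

theorem le_star_pow_mul_mul_pow_add_sum (h : p ≤ star a * p * a + q) (N : ℕ) :
    p ≤ star (a ^ N) * p * a ^ N + ∑ j ∈ Finset.range N, star (a ^ j) * q * a ^ j := by
  induction N with
  | zero => simp
  | succ N ih =>
    refine ih.trans ?_
    calc star (a ^ N) * p * a ^ N + ∑ j ∈ Finset.range N, star (a ^ j) * q * a ^ j
        ≤ star (a ^ N) * (star a * p * a + q) * a ^ N +
            ∑ j ∈ Finset.range N, star (a ^ j) * q * a ^ j := by
          gcongr
          exact star_left_conjugate_le_conjugate h _
      _ = _ := by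
          rw [Finset.sum_range_succ, pow_succ', star_mul]
          noncomm_ring

theorem exists_norm_le_of_le_star_mul_mul_add (ha : ∀ μ ∈ spectrum ℂ a, ‖μ‖ < 1) (q : 𝔸) :
    ∃ C : ℝ, ∀ p : 𝔸, 0 ≤ p → p ≤ star a * p * a + q → ‖p‖ ≤ C := by
  have hpow := (tendsto_pow_zero_of_forall_mem_spectrum ha).norm
  rw [norm_zero] at hpow
  obtain ⟨N, hN⟩ := (hpow.eventually (gt_mem_nhds one_half_pos)).exists
  set s := ∑ j ∈ Finset.range N, star (a ^ j) * q * a ^ j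
  refine ⟨2 * ‖s‖, fun p hp h => ?_⟩
  have hcontract : ‖star (a ^ N) * p * a ^ N‖ ≤ 1 / 2 * ‖p‖ := by
    calc ‖star (a ^ N) * p * a ^ N‖ ≤ ‖a ^ N‖ * ‖p‖ * ‖a ^ N‖ := by
          simpa only [norm_star] using norm_mul₃_le (a := star (a ^ N)) (b := p) (c := a ^ N)
      _ ≤ 1 / 2 * ‖p‖ * 1 := by
          gcongr
          linarith
      _ = 1 / 2 * ‖p‖ := mul_one _
  have hp_le : ‖p‖ ≤ ‖star (a ^ N) * p * a ^ N‖ + ‖s‖ :=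
    (CStarAlgebra.norm_le_norm_of_nonneg_of_le hp (le_star_pow_mul_mul_pow_add_sum h N)).trans
      (norm_add_le _ _)
  linarith

end SteinInequality

section LowGainLimit

variable {m n : Type*} [Fintype m] [Fintype n] [DecidableEq n]
  {A : Matrix n n ℂ} {B : Matrix n m ℂ}

theorem IsRiccatiPair.eq_zero {P : Matrix n n ℂ} {K L : Matrix m n ℂ}
    (h : IsRiccatiPair A B 0 P K) (hA : ∀ μ ∈ spectrum ℂ A, ‖μ‖ ≤ 1)
    (hL : SchurStableC (A - B * L)) : P = 0 := by
  by_contra hP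
  have hcostate : Aᴴ * P * (A - B * K) = P := by rw [h.costate, zero_smul, sub_zero]
  obtain ⟨μ, v, hw, hAw, hPv⟩ := exists_eigenvector_of_mul_mul_eq_self hcostate hP
  have hμ : ‖μ‖ ≤ 1 := by
    simpa using hA _ (star_mem_spectrum_of_conjTranspose_mulVec_eq_smul hw hAw)
  have hscale : energy v P = ‖μ‖ ^ 2 * energy ((A - B * K) *ᵥ v) P := by
    rw [← energy_smul]
    exact energy_congr h.posSemidef.isHermitian (by rw [Matrix.mulVec_smul, ← hPv])
  have hdecr : energy ((A - B * K) *ᵥ v) P = energy v P - energy (K *ᵥ v) 1 := by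
    rw [← energy_conjTranspose_mul_mul, h.conjTranspose_mul_mul_closedLoop, zero_smul, sub_zero,
      map_sub, energy_conjTranspose_mul_self]
  have hKv : K *ᵥ v = 0 := by
    by_contra hne
    have hle : energy v P ≤ energy ((A - B * K) *ᵥ v) P := hscale.trans_le
      (mul_le_of_le_one_left (energy_nonneg h.posSemidef _) (pow_le_one₀ (norm_nonneg μ) hμ))
    linarith [energy_one_pos hne]
  have hBw : Bᴴ *ᵥ (P *ᵥ v) = 0 := by
    rw [hPv, Matrix.mulVec_smul, Matrix.mulVec_mulVec, Matrix.mulVec_mulVec, h.gain, hKv,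
      smul_zero]
  have hclosed : (A - B * L)ᴴ *ᵥ (P *ᵥ v) = μ • P *ᵥ v := by
    rw [conjTranspose_sub, conjTranspose_mul, Matrix.sub_mulVec, ← Matrix.mulVec_mulVec _ Lᴴ,
      hBw, Matrix.mulVec_zero, sub_zero, hAw]
  have hμ_lt : ‖μ‖ < 1 := by
    simpa using hL _ (star_mem_spectrum_of_conjTranspose_mulVec_eq_smul hw hclosed)
  rw [hdecr, hKv, energy_zero, sub_zero] at hscale
  exact hscale.not_gt (mul_lt_of_lt_one_left (energy_pos h.posSemidef hw)
    (pow_lt_one₀ (norm_nonneg μ) hμ_lt two_ne_zero))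

open scoped Matrix.Norms.L2Operator

theorem IsRiccatiPair.norm_gain_mul_self_le {ε : ℝ} {P : Matrix n n ℂ}
    {K : Matrix m n ℂ} (h : IsRiccatiPair A B ε P K) (hε : 0 ≤ ε) : ‖K‖ * ‖K‖ ≤ ‖P‖ := by
  rw [← Matrix.l2_opNorm_conjTranspose_mul_self]
  exact CStarAlgebra.norm_le_norm_of_nonneg_of_le
    (Matrix.posSemidef_conjTranspose_mul_self K).nonneg (h.conjTranspose_mul_gain_le hε)

theorem exists_norm_le_of_isRiccatiPair {L : Matrix m n ℂ} (hL : SchurStableC (A - B * L)) :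
    ∃ C : ℝ, ∀ ε P (K : Matrix m n ℂ), IsRiccatiPair A B ε P K → ε ≤ 1 → ‖P‖ ≤ C := by
  obtain ⟨C, hC⟩ := exists_norm_le_of_le_star_mul_mul_add hL (Lᴴ * L + 1)
  exact ⟨C, fun ε P K h hε =>
    hC P h.posSemidef.nonneg (h.le_conjTranspose_mul_mul_add hε L)⟩

theorem tendsto_zero_of_isRiccatiPair {L : Matrix m n ℂ} (hA : ∀ μ ∈ spectrum ℂ A, ‖μ‖ ≤ 1)
    (hL : SchurStableC (A - B * L)) {P : ℝ → Matrix n n ℂ} {K : ℝ → Matrix m n ℂ}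
    (h : ∀ᶠ ε in 𝓝[>] 0, IsRiccatiPair A B ε (P ε) (K ε)) :
    Tendsto (fun ε => (P ε, K ε)) (𝓝[>] 0) (𝓝 (0, 0)) := by
  have : ProperSpace (Matrix n n ℂ) := FiniteDimensional.proper ℂ _
  have : ProperSpace (Matrix m n ℂ) := FiniteDimensional.proper ℂ _
  obtain ⟨C, hC⟩ := exists_norm_le_of_isRiccatiPair hL
  have hcompact : IsCompact (Set.Icc (0 : ℝ) 1 ×ˢ
      (Metric.closedBall (0 : Matrix n n ℂ) C ×ˢ Metric.closedBall (0 : Matrix m n ℂ) √C)) :=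
    isCompact_Icc.prod ((isCompact_closedBall _ _).prod (isCompact_closedBall _ _))
  have hmem : ∀ᶠ ε in 𝓝[>] 0, (ε, P ε, K ε) ∈ Set.Icc (0 : ℝ) 1 ×ˢ
      (Metric.closedBall (0 : Matrix n n ℂ) C ×ˢ Metric.closedBall (0 : Matrix m n ℂ) √C) := by
    filter_upwards [h, Ioc_mem_nhdsGT one_pos] with ε hric hε
    have hPC : ‖P ε‖ ≤ C := hC ε _ _ hric hε.2
    refine ⟨Set.Ioc_subset_Icc_self hε, mem_closedBall_zero_iff.2 hPC,
      mem_closedBall_zero_iff.2 (Real.le_sqrt_of_sq_le ?_)⟩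
    rw [sq]
    exact (hric.norm_gain_mul_self_le hε.1.le).trans hPC
  have hlim : Tendsto (fun ε => (ε, P ε, K ε)) (𝓝[>] 0) (𝓝 (0, 0, 0)) := by
    refine hcompact.tendsto_nhds_of_unique_mapClusterPt hmem ?_
    rintro ⟨ε₀, P₀, K₀⟩ - hcluster
    obtain rfl : ε₀ = 0 := by
      have hε₀ : ClusterPt ε₀ (𝓝[>] 0) := mapClusterPt_id_iff.1
        (hcluster.continuousAt_comp (f := Prod.fst) continuousAt_fst)
      exact eq_of_nhds_neBot (hε₀.mono nhdsWithin_le_nhds)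
    have hric₀ : IsRiccatiPair A B 0 P₀ K₀ :=
      (isClosed_setOf_isRiccatiPair A B).mem_of_mapClusterPt hcluster h
    have hP₀ : P₀ = 0 := hric₀.eq_zero hA hL
    have hK₀ : K₀ = 0 := by
      rw [← hric₀.gain, hP₀, Matrix.mul_zero, Matrix.zero_mul]
    rw [hP₀, hK₀]
  exact (continuous_snd.tendsto _).comp hlim

end LowGainLimit

section CharacteristicRoots

theorem exists_gt_eventually_forall_mem_spectrum_le {𝔸 : Type*} [NormedRing 𝔸] [NormedAlgebra ℂ 𝔸]
    [CompleteSpace 𝔸] {a : 𝔸} (ha : ∀ μ ∈ spectrum ℂ a, ‖μ‖ ≤ 1) {f : ℂ → ℝ} {b : ℝ}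
    (hf : ∀ μ ∈ spectrum ℂ a, ‖μ‖ = 1 → ContinuousAt f μ)
    (hb : ∀ μ ∈ spectrum ℂ a, ‖μ‖ = 1 → b < f μ) :
    ∃ r > b, ∀ᶠ x in 𝓝 a, ∀ z ∈ spectrum ℂ x, 1 ≤ ‖z‖ → r < f z := by
  have hcompact : IsCompact (spectrum ℂ a ∩ {μ | ‖μ‖ = 1}) :=
    (spectrum.isCompact a).inter_right (isClosed_eq continuous_norm continuous_const)
  obtain ⟨r', hr', hle⟩ := hcompact.exists_forall_le'
    (fun μ hμ => (hf μ hμ.1 hμ.2).continuousWithinAt) fun μ hμ => hb μ hμ.1 hμ.2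
  obtain ⟨r, hbr, hrr'⟩ := exists_between hr'
  refine ⟨r, hbr, ?_⟩
  have hnhds : {z : ℂ | 1 ≤ ‖z‖ → r < f z} ∈ 𝓝ˢ (spectrum ℂ a) := by
    refine mem_nhdsSet_iff_forall.2 fun μ hμ => ?_
    rcases (ha μ hμ).lt_or_eq with hlt | heq
    · filter_upwards [continuous_norm.continuousAt.eventually (gt_mem_nhds hlt)] with z hz hz'
      exact absurd hz' hz.not_ge
    · filter_upwards [(hf μ hμ heq).eventually (lt_mem_nhds (hrr'.trans_le (hle μ ⟨hμ, heq⟩)))]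
        with z hz _ using hz
  filter_upwards [upperHemicontinuous_spectrum ℂ 𝔸 a _ hnhds] with x hx z hz
  exact subset_of_mem_nhdsSet hx hz

open scoped Matrix.Norms.L2Operator

variable {m n : Type*} [Fintype m] [Fintype n] [DecidableEq n]
  {A : Matrix n n ℂ} {B : Matrix n m ℂ}

theorem IsRiccatiPair.norm_lt_one [DecidableEq m] {ε : ℝ} {P : Matrix n n ℂ} {K : Matrix m n ℂ}
    (h : IsRiccatiPair A B ε P K) (hε : 0 < ε) {c z : ℂ} {v : n → ℂ} (hv : v ≠ 0)
    (heig : (A - B * (c • K)) *ᵥ v = z • v)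
    (hc : ‖c - 1‖ ^ 2 * ‖Bᴴ * P * B‖ ≤ 2 * c.re - 1) : ‖z‖ < 1 := by
  have hS : (Bᴴ * P * B).PosSemidef := h.posSemidef.conjTranspose_mul_mul_same B
  set y := energy (K *ᵥ v) 1
  have henergy : ‖z‖ ^ 2 * energy v P = energy v P - ε * energy v 1 - ‖c‖ ^ 2 * y +
      ‖c - 1‖ ^ 2 * (y + energy (K *ᵥ v) (Bᴴ * P * B)) := by
    have hΔ : (c • K - K) *ᵥ v = (c - 1) • K *ᵥ v := by
      rw [Matrix.sub_mulVec, Matrix.smul_mulVec, sub_smul, one_smul]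
    have hsquares := congrArg (energy v) (h.completion_of_squares (c • K))
    rwa [energy_conjTranspose_mul_mul, heig, energy_smul, map_add, map_sub, map_sub, map_smul,
      energy_conjTranspose_mul_self, energy_conjTranspose_mul_mul, hΔ, energy_smul, map_add,
      Matrix.smul_mulVec, energy_smul, smul_eq_mul] at hsquares
  have hnorm : ‖c - 1‖ ^ 2 = ‖c‖ ^ 2 - 2 * c.re + 1 := by
    simp only [← Complex.normSq_eq_norm_sq, Complex.normSq_apply, Complex.sub_re, Complex.sub_im,
      Complex.one_re, Complex.one_im]
    ring
  have hy : 0 ≤ y := energy_nonneg Matrix.PosSemidef.one _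
  have hcross : ‖c - 1‖ ^ 2 * energy (K *ᵥ v) (Bᴴ * P * B) ≤ (2 * c.re - 1) * y :=
    calc ‖c - 1‖ ^ 2 * energy (K *ᵥ v) (Bᴴ * P * B)
        ≤ ‖c - 1‖ ^ 2 * (‖Bᴴ * P * B‖ * y) := by
          gcongr
          exact energy_le_norm_mul hS.isHermitian _
      _ ≤ (2 * c.re - 1) * y := by
          rw [← mul_assoc]
          gcongr
  have hdecr : ‖z‖ ^ 2 * energy v P < energy v P := by
    have hpos : 0 < ε * energy v 1 := mul_pos hε (energy_one_pos hv)
    have hy_eq : ‖c - 1‖ ^ 2 * y = ‖c‖ ^ 2 * y - (2 * c.re - 1) * y := by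
      rw [hnorm]
      ring
    linarith
  by_contra! hz
  exact hdecr.not_ge
    (le_mul_of_one_le_left (energy_nonneg h.posSemidef v) (one_le_pow₀ hz))

theorem IsRiccatiPair.delaySchurStable [DecidableEq m] {ε : ℝ} {P : Matrix n n ℂ}
    {K : Matrix m n ℂ} (h : IsRiccatiPair A B ε P K) (hε : 0 < ε) {κ : ℕ} {ρ : ℂ}
    (hρ : ∀ z : ℂ, 1 ≤ ‖z‖ → z ∈ spectrum ℂ (A - B * ((ρ * (z ^ κ)⁻¹) • K)) →
      (‖ρ‖ + 1) ^ 2 * ‖Bᴴ * P * B‖ ≤ 2 * (ρ * (z ^ κ)⁻¹).re - 1) :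
    DelaySchurStable κ A.mulVecLin (ρ • (B * K)).mulVecLin := by
  intro z v hv hroot
  by_contra! hz
  have hz0 : z ^ κ ≠ 0 := pow_ne_zero _ (norm_pos_iff.1 (one_pos.trans_le hz))
  set c := ρ * (z ^ κ)⁻¹ with hc_def
  have heig : (A - B * (c • K)) *ᵥ v = z • v := by
    have hroot' : z ^ κ • (A - B * (c • K)) *ᵥ v = z ^ κ • z • v := by
      rw [smul_smul, ← pow_succ, hroot, Matrix.sub_mulVec, smul_sub, Matrix.mul_smul,
        Matrix.smul_mulVec, smul_smul, hc_def, mul_left_comm, mul_inv_cancel₀ hz0, mul_one,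
        Matrix.mulVecLin_apply, Matrix.mulVecLin_apply, Matrix.smul_mulVec]
    exact smul_right_injective _ hz0 hroot'
  have hc : ‖c - 1‖ ≤ ‖ρ‖ + 1 :=
    calc ‖c - 1‖ ≤ ‖ρ‖ * (‖z‖ ^ κ)⁻¹ + 1 := by
          simpa [hc_def] using norm_sub_le c 1
      _ ≤ ‖ρ‖ + 1 := by
          gcongr
          exact mul_le_of_le_one_right (norm_nonneg ρ) (inv_le_one_of_one_le₀ (one_le_pow₀ hz))
  refine hz.not_gt (h.norm_lt_one hε hv heig ?_)
  calc ‖c - 1‖ ^ 2 * ‖Bᴴ * P * B‖ ≤ (‖ρ‖ + 1) ^ 2 * ‖Bᴴ * P * B‖ := by gcongr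
    _ ≤ 2 * c.re - 1 := hρ z hz (mem_spectrum_of_mulVec_eq_smul hv heig)

theorem eventually_delaySchurStable {L : Matrix m n ℂ} (hA : ∀ μ ∈ spectrum ℂ A, ‖μ‖ ≤ 1)
    (hL : SchurStableC (A - B * L)) {P : ℝ → Matrix n n ℂ} {K : ℝ → Matrix m n ℂ}
    (h : ∀ᶠ ε in 𝓝[>] 0, IsRiccatiPair A B ε (P ε) (K ε)) {κ : ℕ} {ρ : ℂ}
    (hρ : ∀ μ ∈ spectrum ℂ A, ‖μ‖ = 1 → 1 / 2 < (ρ * (μ ^ κ)⁻¹).re) :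
    ∀ᶠ ε in 𝓝[>] 0, DelaySchurStable κ A.mulVecLin (ρ • (B * K ε)).mulVecLin := by
  have hcont : ∀ μ ∈ spectrum ℂ A, ‖μ‖ = 1 →
      ContinuousAt (fun z : ℂ => (ρ * (z ^ κ)⁻¹).re) μ := by
    intro μ _ hμ
    have hμ0 : μ ^ κ ≠ 0 := pow_ne_zero _ (norm_ne_zero_iff.1 (hμ.trans_ne one_ne_zero))
    exact Complex.continuous_re.continuousAt.comp
      (continuousAt_const.mul ((continuousAt_id.pow κ).inv₀ hμ0))
  obtain ⟨r, hr, hspec⟩ := exists_gt_eventually_forall_mem_spectrum_le hA hcont hρ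
  obtain ⟨η, hη, hball⟩ := Metric.eventually_nhds_iff.1 hspec
  have hPK := tendsto_zero_of_isRiccatiPair hA hL h
  have hperturb : ∀ᶠ ε in 𝓝[>] 0, ‖ρ‖ * ‖B * K ε‖ < η := by
    have hcont : Continuous fun X : Matrix m n ℂ => ‖ρ‖ * ‖B * X‖ := by fun_prop
    exact ((hcont.tendsto' 0 0 (by simp)).comp hPK.snd_nhds).eventually (gt_mem_nhds hη)
  have hcost : ∀ᶠ ε in 𝓝[>] 0, (‖ρ‖ + 1) ^ 2 * ‖Bᴴ * P ε * B‖ < 2 * r - 1 := by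
    have hcont : Continuous fun X : Matrix n n ℂ => (‖ρ‖ + 1) ^ 2 * ‖Bᴴ * X * B‖ := by fun_prop
    exact ((hcont.tendsto' 0 0 (by simp)).comp hPK.fst_nhds).eventually
      (gt_mem_nhds (by linarith))
  filter_upwards [h, self_mem_nhdsWithin, hperturb, hcost] with ε hric hε hperturb hcost
  refine hric.delaySchurStable hε fun z hz hmem => ?_
  have hdist : dist (A - B * ((ρ * (z ^ κ)⁻¹) • K ε)) A < η :=
    calc dist (A - B * ((ρ * (z ^ κ)⁻¹) • K ε)) A
        = ‖ρ‖ * (‖z‖ ^ κ)⁻¹ * ‖B * K ε‖ := by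
          rw [dist_eq_norm, sub_sub_cancel_left, norm_neg, Matrix.mul_smul, norm_smul, norm_mul,
            norm_inv, norm_pow]
      _ ≤ ‖ρ‖ * ‖B * K ε‖ := by
          gcongr
          exact mul_le_of_le_one_right (norm_nonneg ρ) (inv_le_one_of_one_le₀ (one_le_pow₀ hz))
      _ < η := hperturb
  linarith [hball hdist z hmem hz]

end CharacteristicRoots

section Complexification

/-- The complex matrix with the same entries as a real matrix, linear in the matrix. -/
def complexify {m n : Type*} : Matrix m n ℝ →ₗ[ℝ] Matrix m n ℂ :=
  Complex.ofRealAm.toLinearMap.mapMatrix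

variable {l m n : Type*}

theorem complexify_conjTranspose (M : Matrix m n ℝ) : complexify Mᴴ = (complexify M)ᴴ := by
  ext i j
  simp [complexify]

theorem complexify_one [DecidableEq n] : complexify (1 : Matrix n n ℝ) = 1 :=
  Matrix.map_one _ Complex.ofReal_zero Complex.ofReal_one

theorem complexify_mul [Fintype m] (M : Matrix l m ℝ) (N : Matrix m n ℝ) :
    complexify (M * N) = complexify M * complexify N :=
  Matrix.map_mul (f := Complex.ofRealHom)

theorem complexify_mulVec [Fintype m] (M : Matrix l m ℝ) (v : m → ℝ) :
    complexify M *ᵥ (fun i => (v i : ℂ)) = fun i => ((M *ᵥ v) i : ℂ) :=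
  funext fun i => (Complex.ofRealHom.map_mulVec M v i).symm

theorem posSemidef_complexify [Finite n] {M : Matrix n n ℝ} (hM : M.PosSemidef) :
    (complexify M).PosSemidef := by
  cases nonempty_fintype n
  obtain ⟨N, rfl⟩ := CStarAlgebra.nonneg_iff_eq_star_mul_self.1 hM.nonneg
  rw [Matrix.star_eq_conjTranspose, complexify_mul, complexify_conjTranspose]
  exact Matrix.posSemidef_conjTranspose_mul_self _

variable [Fintype m] [Fintype n]

theorem IsRiccatiPair.complexify [DecidableEq n] {A : Matrix n n ℝ} {B : Matrix n m ℝ} {ε : ℝ}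
    {P : Matrix n n ℝ} {K : Matrix m n ℝ} (h : IsRiccatiPair A B ε P K) :
    IsRiccatiPair (complexify A) (complexify B) ε (complexify P) (complexify K) where
  posSemidef := posSemidef_complexify h.posSemidef
  costate := by
    simpa only [complexify_mul, complexify_conjTranspose, complexify_one, map_sub, map_smul]
      using congrArg _root_.complexify h.costate
  gain := by
    simpa only [complexify_mul, complexify_conjTranspose, map_sub]
      using congrArg _root_.complexify h.gain

theorem DelaySchurStable.tendsto_zero_of_complexify {κ : ℕ} {A D : Matrix n n ℝ}
    (h : DelaySchurStable κ (complexify A).mulVecLin (complexify D).mulVecLin) {x : ℕ → n → ℝ}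
    (hx : ∀ k, x (k + κ + 1) = A *ᵥ x (k + κ) - D *ᵥ x k) : Tendsto x atTop (𝓝 0) := by
  have hcomplex : Tendsto (fun k i => (x k i : ℂ)) atTop (𝓝 0) := by
    refine h.tendsto_zero fun k => ?_
    simp only [Matrix.mulVecLin_apply, complexify_mulVec, hx k, Pi.sub_apply, Complex.ofReal_sub]
    rfl
  refine tendsto_pi_nhds.2 fun i => ?_
  simpa [Function.comp_def] using
    (Complex.continuous_re.tendsto 0).comp (tendsto_pi_nhds.1 hcomplex i)

theorem star_mem_spectrum_complexify [DecidableEq n] {A : Matrix n n ℝ} {μ : ℂ}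
    (hμ : μ ∈ spectrum ℂ (complexify A)) : star μ ∈ spectrum ℂ (complexify A) := by
  have hroot (z : ℂ) : z ∈ spectrum ℂ (complexify A) ↔ Polynomial.aeval z A.charpoly = 0 := by
    rw [Matrix.mem_spectrum_iff_isRoot_charpoly, Polynomial.IsRoot, Polynomial.aeval_def,
      ← Polynomial.eval_map, ← Matrix.charpoly_map]
    rfl
  rw [hroot] at hμ ⊢
  rw [Complex.star_def, Polynomial.aeval_conj, hμ, map_zero]

end Complexification

section RealSystem

variable {n m : ℕ} {A : Matrix (Fin n) (Fin n) ℝ} {B : Matrix (Fin n) (Fin m) ℝ}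

theorem IsDARESol.isRiccatiPair {ε : ℝ} {P : Matrix (Fin n) (Fin n) ℝ} (h : IsDARESol A B ε P) :
    IsRiccatiPair A B ε P (gainK A B P) where
  posSemidef := h.1.posSemidef
  costate := by
    rw [conjTranspose_eq_transpose_of_trivial, gainK, Matrix.mul_sub, eq_sub_iff_add_eq,
      ← sub_eq_zero, ← h.2]
    simp only [Matrix.mul_assoc]
    abel
  gain := by
    have hR : (1 + Bᴴ * P * B).PosDef :=
      Matrix.PosDef.one.add_posSemidef (h.1.posSemidef.conjTranspose_mul_mul_same B)
    have hgain : (1 + Bᴴ * P * B) * gainK A B P = Bᴴ * P * A := by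
      rw [conjTranspose_eq_transpose_of_trivial] at hR ⊢
      exact Matrix.mul_nonsing_inv_cancel_left _ _ ((Matrix.isUnit_iff_isUnit_det _).1 hR.isUnit)
    rw [Matrix.mul_sub, ← Matrix.mul_assoc, ← hgain, Matrix.add_mul, Matrix.one_mul,
      add_sub_cancel_right]

theorem exp_arg_mul_I_of_norm_eq_one {μ : ℂ} (hμ : ‖μ‖ = 1) :
    Complex.exp (μ.arg * Complex.I) = μ := by
  simpa [hμ] using Complex.norm_mul_exp_arg_mul_I μ

theorem exp_abs_arg_mul_I_mem {S : Set ℂ} (hS : ∀ μ ∈ S, star μ ∈ S) {μ : ℂ} (hμ : μ ∈ S)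
    (hnorm : ‖μ‖ = 1) : Complex.exp (|μ.arg| * Complex.I) ∈ S := by
  have hpolar := exp_arg_mul_I_of_norm_eq_one hnorm
  rcases abs_choice μ.arg with habs | habs
  · rwa [habs, hpolar]
  · have hconj : Complex.exp ((-μ.arg : ℝ) * Complex.I) = star μ := by
      conv_rhs => rw [← hpolar, Complex.star_def, ← Complex.exp_conj]
      simp
    rw [habs, hconj]
    exact hS μ hμ

theorem abs_arg_le_omegaMax {μ : ℂ} (hμ : μ ∈ spectrum ℂ (complexify A)) (hnorm : ‖μ‖ = 1) :
    |μ.arg| ≤ omegaMax A := by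
  have hunstable : ¬ SchurStable A := fun h => (h μ hμ).ne hnorm
  rw [omegaMax, if_neg hunstable]
  refine le_csSup ⟨Real.pi, fun ω hω => hω.1.2⟩ ⟨⟨abs_nonneg _, Complex.abs_arg_le_pi μ⟩, ?_⟩
  have hmem := exp_abs_arg_mul_I_mem (fun _ => star_mem_spectrum_complexify) hμ hnorm
  rwa [spectrum.mem_iff, Algebra.algebraMap_eq_smul_one, Matrix.isUnit_iff_isUnit_det,
    isUnit_iff_ne_zero, not_not] at hmem

theorem re_inv_pow_eq_cos_mul_abs_arg {μ : ℂ} (hμ : ‖μ‖ = 1) (κ : ℕ) :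
    ((μ ^ κ)⁻¹).re = Real.cos (κ * |μ.arg|) := by
  have hpolar := exp_arg_mul_I_of_norm_eq_one hμ
  have hexp : (μ ^ κ)⁻¹ = Complex.exp ((-(κ * μ.arg) : ℝ) * Complex.I) := by
    conv_lhs => rw [← hpolar, ← Complex.exp_nat_mul, ← Complex.exp_neg]
    push_cast
    ring_nf
  rw [hexp, Complex.exp_ofReal_mul_I_re, Real.cos_neg, ← Real.cos_abs, abs_mul, Nat.abs_cast]

theorem half_lt_re_mul_inv_pow {κ κbar : ℕ} {ρ : ℝ} (hρpos : 0 < ρ)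
    (hκbar : (κbar : ℝ) * omegaMax A < Real.pi / 2)
    (hρ : 1 / 2 < ρ * Real.cos ((κbar : ℝ) * omegaMax A)) (hκ : κ ≤ κbar) {μ : ℂ}
    (hμ : μ ∈ spectrum ℂ (complexify A)) (hnorm : ‖μ‖ = 1) :
    1 / 2 < ((ρ : ℂ) * (μ ^ κ)⁻¹).re := by
  have hangle : (κ : ℝ) * |μ.arg| ≤ κbar * omegaMax A := by
    gcongr
    exact abs_arg_le_omegaMax hμ hnorm
  rw [Complex.re_ofReal_mul, re_inv_pow_eq_cos_mul_abs_arg hnorm]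
  refine hρ.trans_le (mul_le_mul_of_nonneg_left ?_ hρpos.le)
  exact Real.cos_le_cos_of_nonneg_of_le_pi (by positivity) (by linarith [Real.pi_pos]) hangle

end RealSystem

/-- for `ρ cos(κ̄·ω_max) > 1/2` there exists `ε* > 0` such that for all
`ε ∈ (0, ε*]` and every integer delay `κ ∈ {0,…,κ̄}`, every solution of the delayed
closed-loop system `x(k+1) = A x(k) − ρ B K_ε x(k−κ)` converges to zero. Time is
shifted by `κbar` so that `x : ℕ → ℝⁿ` represents the trajectory on integers `≥ -κbar`,
with arbitrary initial data on `{−κ̄,…,0}`. -/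
theorem delayed_closed_loop_stability {n m : ℕ}
    (A : Matrix (Fin n) (Fin n) ℝ) (B : Matrix (Fin n) (Fin m) ℝ)
    (hstab : Stabilizable A B) (hA : EigInClosedUnitDisc A)
    (κbar : ℕ) (hκbar : (κbar : ℝ) * omegaMax A < Real.pi / 2)
    (ρ : ℝ) (hρpos : 0 < ρ) (hρ : 1 / 2 < ρ * Real.cos ((κbar : ℝ) * omegaMax A))
    (P : ℝ → Matrix (Fin n) (Fin n) ℝ)
    (hP : ∀ ε > (0 : ℝ), IsDARESol A B ε (P ε)) :
    ∃ εstar > (0 : ℝ), ∀ ε ∈ Set.Ioc (0 : ℝ) εstar,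
      ∀ κ : ℕ, κ ≤ κbar →
      ∀ x : ℕ → Fin n → ℝ,
        (∀ k : ℕ, x (k + κbar + 1)
          = A.mulVec (x (k + κbar))
            - ρ • (B * gainK A B (P ε)).mulVec (x (k + κbar - κ))) →
        Tendsto x atTop (nhds 0) := by
  obtain ⟨L, hL⟩ := hstab
  have hclosed : SchurStableC (complexify A - complexify B * complexify L) := by
    rw [← complexify_mul, ← map_sub]
    exact hL
  have hpair : ∀ᶠ ε in 𝓝[>] 0, IsRiccatiPair (complexify A) (complexify B) ε (complexify (P ε))
      (complexify (gainK A B (P ε))) := by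
    filter_upwards [self_mem_nhdsWithin] with ε hε using (hP ε hε).isRiccatiPair.complexify
  have hfeedback (ε : ℝ) : complexify (ρ • (B * gainK A B (P ε))) =
      (ρ : ℂ) • (complexify B * complexify (gainK A B (P ε))) := by
    rw [map_smul, complexify_mul, Complex.coe_smul]
  have hstable : ∀ᶠ ε in 𝓝[>] 0, ∀ κ ∈ Finset.range (κbar + 1),
      DelaySchurStable κ (complexify A).mulVecLin
        (complexify (ρ • (B * gainK A B (P ε)))).mulVecLin := by
    refine (Filter.eventually_all_finset _).2 fun κ hκ => ?_
    simp_rw [hfeedback]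
    exact eventually_delaySchurStable (A := complexify A) hA hclosed hpair fun μ =>
      half_lt_re_mul_inv_pow hρpos hκbar hρ (Finset.mem_range_succ_iff.1 hκ)
  obtain ⟨εstar, hεstar, hsub⟩ := mem_nhdsGT_iff_exists_Ioc_subset.1 hstable
  refine ⟨εstar, hεstar, fun ε hε κ hκ x hx => (tendsto_add_atTop_iff_nat (κbar - κ)).1 ?_⟩
  refine (hsub hε κ (Finset.mem_range_succ_iff.2 hκ)).tendsto_zero_of_complexify fun k => ?_
  rw [Matrix.smul_mulVec, show k + κ + 1 + (κbar - κ) = k + κbar + 1 by omega,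
    show k + κ + (κbar - κ) = k + κbar by omega, ← Nat.add_sub_assoc hκ]
  exact hx k
end
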